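/- Let f : E → [0,∞] be upper semicontinuous and strictly upper radial, let x* ∈ E with 0 < f(x*) < ∞ and let C > 0, and suppose the global sharpness bound f(x) ≤ max(f(x*) − C·‖x − x*‖, 0) holds for all x ∈ E. Then, with y* = x*/f(x*), for every y ∈ E one has f^Γ(y) ≥ 1/f(x*) + (C/(C·‖x*‖ + f(x*)))·‖y − y*‖. -/

import Mathlib

open scoped ENNReal RealInnerProductSpace Pointwise
open Metric Set

variable {E : Type*} [NormedAddCommGroup E] [InnerProductSpace ℝ E] [FiniteDimensional ℝ E]

/-- The hypograph of `f`, viewed inside `E × (0,∞)`. -/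
def hypo (f : E → ℝ≥0∞) : Set (E × ℝ) := {p | 0 < p.2 ∧ ENNReal.ofReal p.2 ≤ f p.1}

/-- The epigraph of `f`, viewed inside `E × (0,∞)`. -/
def epigraph (f : E → ℝ≥0∞) : Set (E × ℝ) := {p | 0 < p.2 ∧ f p.1 ≤ ENNReal.ofReal p.2}

/-- `f` is upper semicontinuous: its hypograph is closed in `E × (0,∞)`. -/
def IsUSC (f : E → ℝ≥0∞) : Prop := closure (hypo f) ∩ {p : E × ℝ | 0 < p.2} ⊆ hypo f

/-- The perspective function `(y, v) ↦ v ⬝ f(y/v)`. -/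
noncomputable def persp (f : E → ℝ≥0∞) (p : E × ℝ) : ℝ≥0∞ :=
  ENNReal.ofReal p.2 * f (p.2⁻¹ • p.1)

/-- `f` is upper radial: its perspective function is u.s.c. on `E × (0,∞)` and
nondecreasing in `v`. -/
def UpperRadial (f : E → ℝ≥0∞) : Prop :=
  UpperSemicontinuousOn (persp f) {p : E × ℝ | 0 < p.2} ∧
  ∀ (y : E) (v v' : ℝ), 0 < v → v ≤ v' → persp f (y, v) ≤ persp f (y, v')

/-- `f` is strictly upper radial. -/
def StrictlyUpperRadial (f : E → ℝ≥0∞) : Prop :=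
  UpperRadial f ∧ ∀ (y : E) (v v' : ℝ), 0 < v → v < v' →
    0 < persp f (y, v) → persp f (y, v) < ⊤ → persp f (y, v) < persp f (y, v')

/-- The upper radial transformation `f^Γ(y) = sup{v > 0 : v ⬝ f(y/v) ≤ 1}` (`sup ∅ = 0`). -/
noncomputable def radial (f : E → ℝ≥0∞) (y : E) : ℝ≥0∞ :=
  ⨆ (v : ℝ) (_ : 0 < v ∧ persp f (y, v) ≤ 1), ENNReal.ofReal v

/-- The Euclidean norm on `E × ℝ`. -/
noncomputable def pnorm (p : E × ℝ) : ℝ := Real.sqrt (‖p.1‖ ^ 2 + p.2 ^ 2)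

/-- `w` is a proximal normal to `S` at `z ∈ S`: `dist(z + ε w, S) = ε ‖w‖` for some `ε > 0`,
with the Euclidean distance on `E × ℝ`. -/
def IsProxNormal (S : Set (E × ℝ)) (z w : E × ℝ) : Prop :=
  z ∈ S ∧ ∃ ε : ℝ, 0 < ε ∧ sInf ((fun q => pnorm (z + ε • w - q)) '' S) = ε * pnorm w

/-- `R(f)`: the infimum of `‖x'‖` over points on hyperplanes induced by proximal normals of
the hypograph (`inf ∅ = ∞`). -/
noncomputable def Rrad (f : E → ℝ≥0∞) : ℝ≥0∞ :=
  ⨅ (x' : E) (_ : ∃ p w, IsProxNormal (hypo f) p w ∧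
    ⟪w.1, x'⟫ = ⟪w.1, p.1⟫ + w.2 * p.2), ENNReal.ofReal ‖x'‖

/-- `D(f) = sup{‖x‖ : 0 < f(x) < ∞}`. -/
noncomputable def Drad (f : E → ℝ≥0∞) : ℝ≥0∞ :=
  ⨆ (x : E) (_ : 0 < f x ∧ f x < ⊤), ENNReal.ofReal ‖x‖

/-- The proximal subdifferential of `f` at `x` (empty unless `f x ∈ (0,∞)`). -/
def subdiffP (f : E → ℝ≥0∞) (x : E) : Set E :=
  {ζ | 0 < f x ∧ f x < ⊤ ∧ IsProxNormal (epigraph f) (x, (f x).toReal) (ζ, -1)}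

/-- The proximal supdifferential of `f` at `x` (empty unless `f x ∈ (0,∞)`). -/
def supdiffP (f : E → ℝ≥0∞) (x : E) : Set E :=
  {ζ | 0 < f x ∧ f x < ⊤ ∧ IsProxNormal (hypo f) (x, (f x).toReal) (-ζ, 1)}

/-- `ζ` is a subgradient of `g` at `y`: `g(z) ≥ g(y) + ⟨ζ, z - y⟩` for all `z`. -/
def IsSubgrad (g : E → ℝ≥0∞) (y ζ : E) : Prop :=
  ∀ z : E, (g y : EReal) + ((⟪ζ, z - y⟫ : ℝ) : EReal) ≤ (g z : EReal)

/-- The Minkowski gauge `γ_S(y) = inf{λ > 0 : y ∈ λ S}` (`inf ∅ = ∞`). -/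
noncomputable def gaugeE (S : Set E) (y : E) : ℝ≥0∞ :=
  ⨅ (lam : ℝ) (_ : 0 < lam ∧ y ∈ lam • S), ENNReal.ofReal lam

/-- The indicator `ι_S` taking value `∞` on `S` and `0` elsewhere. -/
noncomputable def indic (S : Set E) (x : E) : ℝ≥0∞ := S.indicator (fun _ => (⊤ : ℝ≥0∞)) x

/-!
The radial transformation reverses the pointwise order, so it suffices to bound from below the
transform of the truncated cone `x ↦ max (m - C ‖x - x₀‖) 0` with `m = f x₀`. The perspective
function of this cone at `(y, v)` is the positive part of `v m - C ‖y - v x₀‖`. For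
`v = 1 / m + t` this is at most `1` as soon as `t m ≤ C ‖y - v x₀‖`, and since `y - v x₀` differs
from `y - x₀ / m` by `t x₀`, it is enough that `t (C ‖x₀‖ + m) = C ‖y - x₀ / m‖`.
-/

section SeminormedSpace

variable {V : Type*} [SeminormedAddCommGroup V]

/-- The truncated cone with apex `(x₀, m)` and slope `C`, the majorant in the global sharpness
bound. Its height `m` is a free parameter instead of the value at `x₀` of the bounded function. -/
noncomputable def sharpCone (m C : ℝ) (x₀ x : V) : ℝ≥0∞ :=
  ENNReal.ofReal (max (m - C * ‖x - x₀‖) 0)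

variable [NormedSpace ℝ V]

theorem mul_norm_inv_smul_sub {v : ℝ} (hv : 0 < v) (x y : V) :
    v * ‖v⁻¹ • y - x‖ = ‖y - v • x‖ := by
  rw [← norm_smul_of_nonneg hv.le, smul_sub, smul_inv_smul₀ hv.ne']

theorem norm_sub_smul_le_add (a t : ℝ) (x y : V) :
    ‖y - a • x‖ ≤ ‖y - (a + t) • x‖ + |t| * ‖x‖ := by
  calc ‖y - a • x‖ = ‖(y - (a + t) • x) + t • x‖ := by congr 1; module
    _ ≤ ‖y - (a + t) • x‖ + ‖t • x‖ := norm_add_le _ _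
    _ = ‖y - (a + t) • x‖ + |t| * ‖x‖ := by rw [norm_smul, Real.norm_eq_abs]

end SeminormedSpace

section RadialTransform

variable {V : Type*} [NormedAddCommGroup V] [InnerProductSpace ℝ V]

theorem persp_mono : Monotone (persp : (V → ℝ≥0∞) → V × ℝ → ℝ≥0∞) :=
  fun _ _ hfg _ => mul_le_mul_right (hfg _) _

theorem radial_antitone : Antitone (radial : (V → ℝ≥0∞) → V → ℝ≥0∞) :=
  fun _ _ hfg y => biSup_mono fun v hv => ⟨hv.1, (persp_mono hfg (y, v)).trans hv.2⟩

theorem ofReal_le_radial {f : V → ℝ≥0∞} {y : V} {v : ℝ} (hv : 0 < v)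
    (hf : persp f (y, v) ≤ 1) : ENNReal.ofReal v ≤ radial f y :=
  le_iSup₂_of_le v ⟨hv, hf⟩ le_rfl

theorem persp_sharpCone (m C : ℝ) (x₀ y : V) {v : ℝ} (hv : 0 < v) :
    persp (sharpCone m C x₀) (y, v) = ENNReal.ofReal (v * m - C * ‖y - v • x₀‖) := by
  calc persp (sharpCone m C x₀) (y, v)
      = ENNReal.ofReal v * ENNReal.ofReal (m - C * ‖v⁻¹ • y - x₀‖) := by
        simp only [persp, sharpCone, ENNReal.ofReal_max, ENNReal.ofReal_zero, zero_le, max_eq_left]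
    _ = ENNReal.ofReal (v * m - C * ‖y - v • x₀‖) := by
        rw [← ENNReal.ofReal_mul hv.le, mul_sub, mul_left_comm, mul_norm_inv_smul_sub hv]

theorem le_radial_sharpCone {m C : ℝ} (hm : 0 < m) (hC : 0 ≤ C) (x₀ y : V) :
    ENNReal.ofReal (1 / m + C / (C * ‖x₀‖ + m) * ‖y - m⁻¹ • x₀‖) ≤
      radial (sharpCone m C x₀) y := by
  set t := C / (C * ‖x₀‖ + m) * ‖y - m⁻¹ • x₀‖ with ht
  have ht₀ : 0 ≤ t := by positivity
  have hv : 0 < 1 / m + t := by positivity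
  have height_eq : (1 / m + t) * m = 1 + t * m := by field_simp
  have increment_eq : t * (C * ‖x₀‖ + m) = C * ‖y - m⁻¹ • x₀‖ := by
    have : C * ‖x₀‖ + m ≠ 0 := by positivity
    rw [ht]; field_simp
  have dist_le : ‖y - m⁻¹ • x₀‖ ≤ ‖y - (1 / m + t) • x₀‖ + t * ‖x₀‖ := by
    simpa only [one_div, abs_of_nonneg ht₀] using norm_sub_smul_le_add m⁻¹ t x₀ y
  apply ofReal_le_radial hv
  rw [persp_sharpCone m C x₀ y hv, ENNReal.ofReal_le_one]
  linarith [mul_le_mul_of_nonneg_left dist_le hC]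

theorem statement5_general {f : V → ℝ≥0∞} {m C : ℝ} (hm : 0 < m) (hC : 0 ≤ C) {x₀ : V}
    (hsharp : ∀ x, f x ≤ ENNReal.ofReal (max (m - C * ‖x - x₀‖) 0)) (y : V) :
    ENNReal.ofReal (1 / m + C / (C * ‖x₀‖ + m) * ‖y - m⁻¹ • x₀‖) ≤ radial f y :=
  (le_radial_sharpCone hm hC x₀ y).trans (radial_antitone hsharp y)

end RadialTransform

/-- global sharpness transfers to sharp growth of the radial dual. -/
theorem statement5 (f : E → ℝ≥0∞) (husc : IsUSC f) (hsur : StrictlyUpperRadial f)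
    (xs : E) (hxs : 0 < f xs) (hxs' : f xs < ⊤) (C : ℝ) (hC : 0 < C)
    (hsharp : ∀ x : E, f x ≤ ENNReal.ofReal (max ((f xs).toReal - C * ‖x - xs‖) 0)) :
    ∀ y : E, ENNReal.ofReal (1 / (f xs).toReal +
      (C / (C * ‖xs‖ + (f xs).toReal)) * ‖y - ((f xs).toReal)⁻¹ • xs‖) ≤ radial f y :=
  statement5_general (ENNReal.toReal_pos hxs.ne' hxs'.ne) hC.le hsharp
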